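/- In ℝ⁵ with the standard Euclidean inner product, let S be the set of four vectors (1/3,-2/3,1/3,1/2,-1/2), (-2/3,1/3,1/3,1/2,-1/2), (1/3,-2/3,1/3,-1/2,1/2), (-2/3,1/3,1/3,-1/2,1/2). Then the minimum of ‖x‖² over x in the convex hull of S equals 1/6, and it is attained at the point β₄ = (-1/6,-1/6,1/3,0,0). -/

import Mathlib

/-!
A point `b` of the hull `C` of `S` is its closest point to the origin as soon as `S` lies in the
half-space `‖b‖² ≤ ⟪b, ·⟫`: by convexity so does `C`, and `0 ≤ ‖b - x‖²` turns `‖b‖² ≤ ⟪b, x⟫` into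
`‖b‖² ≤ ‖x‖²`. Here `β₄` is the midpoint of a diagonal of the rectangle whose vertices are the
four weights, and the whole rectangle lies in the bounding hyperplane `⟪β₄, ·⟫ = ‖β₄‖² = 1/6`.
-/

/-- A vector in `ℝ⁵` with the standard Euclidean inner product. -/
noncomputable def vec5 (a b c d e : ℝ) : EuclideanSpace ℝ (Fin 5) :=
  (WithLp.equiv 2 (Fin 5 → ℝ)).symm ![a, b, c, d, e]

section InnerProductSpace

variable {E : Type*} [SeminormedAddCommGroup E] [InnerProductSpace ℝ E]

theorem norm_sq_le_norm_sq_of_norm_sq_le_inner {b x : E} (h : ‖b‖ ^ 2 ≤ inner ℝ b x) :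
    ‖b‖ ^ 2 ≤ ‖x‖ ^ 2 := by
  have expand_sub : ‖b - x‖ ^ 2 = ‖b‖ ^ 2 - 2 * inner ℝ b x + ‖x‖ ^ 2 := norm_sub_sq_real b x
  linarith [sq_nonneg ‖b - x‖]

theorem le_inner_of_mem_convexHull {S : Set E} {b x : E} {c : ℝ}
    (hS : ∀ s ∈ S, c ≤ inner ℝ b s) (hx : x ∈ convexHull ℝ S) : c ≤ inner ℝ b x :=
  convexHull_min hS (convex_halfSpace_ge (innerₗ E b).isLinear c) hx

theorem norm_sq_le_norm_sq_of_mem_convexHull {S : Set E} {b x : E}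
    (hS : ∀ s ∈ S, ‖b‖ ^ 2 ≤ inner ℝ b s) (hx : x ∈ convexHull ℝ S) : ‖b‖ ^ 2 ≤ ‖x‖ ^ 2 :=
  norm_sq_le_norm_sq_of_norm_sq_le_inner (le_inner_of_mem_convexHull hS hx)

end InnerProductSpace

theorem inner_vec5 (a b c d e a' b' c' d' e' : ℝ) :
    inner ℝ (vec5 a b c d e) (vec5 a' b' c' d' e') =
      a * a' + b * b' + c * c' + d * d' + e * e' := by
  simp [vec5, PiLp.inner_apply, Fin.sum_univ_five, mul_comm]

theorem norm_sq_vec5 (a b c d e : ℝ) :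
    ‖vec5 a b c d e‖ ^ 2 = a ^ 2 + b ^ 2 + c ^ 2 + d ^ 2 + e ^ 2 := by
  rw [← real_inner_self_eq_norm_sq, inner_vec5]
  ring

theorem midpoint_vec5 (a b c d e a' b' c' d' e' : ℝ) :
    midpoint ℝ (vec5 a b c d e) (vec5 a' b' c' d' e') =
      vec5 ((a + a') / 2) ((b + b') / 2) ((c + c') / 2) ((d + d') / 2) ((e + e') / 2) := by
  ext i
  fin_cases i <;> simp [vec5, midpoint_eq_smul_add] <;> ring

/-- Table (2.3) for `(GL(3)×GL(2), Sym²k³⊗k²)`: the minimum of `‖x‖²` over the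
convex hull of the listed weight vectors equals `1/6`, attained at
`β₄ = ((-1/6) (-1/6) (1/3) 0 0)`. -/
theorem minsq_of_convexHull_weights :
    let S : Set (EuclideanSpace ℝ (Fin 5)) :=
      {vec5 (1/3) (-2/3) (1/3) (1/2) (-1/2),
       vec5 (-2/3) (1/3) (1/3) (1/2) (-1/2),
       vec5 (1/3) (-2/3) (1/3) (-1/2) (1/2),
       vec5 (-2/3) (1/3) (1/3) (-1/2) (1/2)}
    let β : EuclideanSpace ℝ (Fin 5) := vec5 (-1/6) (-1/6) (1/3) 0 0
    β ∈ convexHull ℝ S ∧ ‖β‖ ^ 2 = 1/6 ∧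
      ∀ x ∈ convexHull ℝ S, (1/6 : ℝ) ≤ ‖x‖ ^ 2 := by
  intro S β
  have norm_sq_β : ‖β‖ ^ 2 = 1 / 6 := by
    norm_num [β, norm_sq_vec5]
  have β_eq_midpoint : β = midpoint ℝ (vec5 (1/3) (-2/3) (1/3) (1/2) (-1/2))
      (vec5 (-2/3) (1/3) (1/3) (-1/2) (1/2)) := by
    norm_num [β, midpoint_vec5]
  have inner_β : ∀ s ∈ S, inner ℝ β s = 1 / 6 := by
    rintro s (rfl | rfl | rfl | rfl) <;> norm_num [β, inner_vec5]
  refine ⟨?_, norm_sq_β, fun x hx ↦ ?_⟩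
  · rw [β_eq_midpoint]
    exact (convex_convexHull ℝ S).midpoint_mem (subset_convexHull ℝ S (by simp [S]))
      (subset_convexHull ℝ S (by simp [S]))
  · rw [← norm_sq_β]
    exact norm_sq_le_norm_sq_of_mem_convexHull (fun s hs ↦ norm_sq_β.trans_le (inner_β s hs).ge) hx
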